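/- Let T > 0 and let V : ℝⁿ → ℝⁿ be Lipschitz continuous, V ∈ C⁵(ℝⁿ,ℝⁿ), with derivatives of order 5 locally Lipschitz with polynomially growing Lipschitz constants. Then there exist a continuous function h_V : ℝⁿ → ℝⁿ with polynomial growth, C > 0 and q ∈ ℕ* such that for all θ ∈ [−T,T] and x ∈ ℝⁿ, ‖exp(θV)x − Ψ₄^V(θ,x) − h_V(x)θ⁵‖ ≤ C(1 + ‖x‖^q)θ⁶. -/

import Mathlib

noncomputable section

/-- Euclidean space ℝⁿ. -/
abbrev Vec (n : ℕ) : Type := EuclideanSpace ℝ (Fin n)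

/-- Classical fourth-order Runge–Kutta map `Ψ₄^V`. -/
def rk4 {n : ℕ} (V : Vec n → Vec n) (θ : ℝ) (x : Vec n) : Vec n :=
  x + (θ / 6) • (V x + (2 : ℝ) • V (x + (θ / 2) • V x)
    + (2 : ℝ) • V (x + (θ / 2) • V (x + (θ / 2) • V x))
    + V (x + θ • V (x + (θ / 2) • V (x + (θ / 2) • V x))))

/-- `φ` is the flow of the vector field `V` : `φ θ x = exp(θV)x`. -/
def IsFlow {n : ℕ} (V : Vec n → Vec n) (φ : ℝ → Vec n → Vec n) : Prop :=
  (∀ x, φ 0 x = x) ∧ ∀ (x : Vec n) (t : ℝ), HasDerivAt (fun s => φ s x) (V (φ t x)) t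

/-- `D` is locally Lipschitz with polynomially growing Lipschitz constant. -/
def PolyLocLip {E F : Type*} [NormedAddCommGroup E] [NormedAddCommGroup F]
    (D : E → F) : Prop :=
  ∃ K : ℝ, 0 ≤ K ∧ ∃ r : ℕ, ∀ x y, ‖D x - D y‖ ≤ K * (1 + ‖x‖ ^ r + ‖y‖ ^ r) * ‖x - y‖

/-!
The flow `t ↦ φ t x` and the Runge–Kutta slope `t ↦ rk4Slope V t x` are curves whose time
derivatives, by Faà di Bruno's formula, are sums of derivatives of `V` applied to lower time
derivatives. Grönwall's inequality bounds the flow linearly in `x`, so by induction on the order all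
these derivatives are bounded polynomially in `x`, uniformly over `[-T, T]`. Taylor expansion in
time, to order `6` for the flow and to order `5` for the slope, thus has polynomially growing
coefficients and remainder. The order conditions say that the coefficients agree up to `θ ^ 4`; the
difference of those of `θ ^ 5` is `h_V`.
-/

open Set

section Norm

variable {X E F : Type*} [NormedAddCommGroup X] [NormedAddCommGroup E] [NormedAddCommGroup F]

/-- Polynomial growth, with weight `(1 + ‖x‖) ^ k` rather than `1 + ‖x‖ ^ k` because these weights
are closed under products. -/
def HasPolyGrowth (f : X → F) : Prop :=
  ∃ C : ℝ, 0 ≤ C ∧ ∃ k : ℕ, ∀ x, ‖f x‖ ≤ C * (1 + ‖x‖) ^ k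

/-- `f θ x = O(θ ^ m)` uniformly in `θ ∈ [-T, T]`, with a constant growing polynomially in `x`. -/
def IsPolyBigO (T : ℝ) (m : ℕ) (f : ℝ → X → F) : Prop :=
  ∃ C : ℝ, 0 ≤ C ∧ ∃ k : ℕ, ∀ θ ∈ Icc (-T) T, ∀ x, ‖f θ x‖ ≤ C * (1 + ‖x‖) ^ k * |θ| ^ m

theorem one_add_norm_pow_le (k : ℕ) (x : X) : (1 + ‖x‖) ^ k ≤ 2 ^ k * (1 + ‖x‖ ^ k) :=
  calc (1 + ‖x‖) ^ k ≤ 2 ^ (k - 1) * (1 + ‖x‖ ^ k) := by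
        simpa using add_pow_le zero_le_one (norm_nonneg x) k
    _ ≤ 2 ^ k * (1 + ‖x‖ ^ k) := by gcongr <;> simp

theorem HasPolyGrowth.exists_le_one_add_norm_pow {f : X → F} (hf : HasPolyGrowth f) :
    ∃ K : ℝ, 0 ≤ K ∧ ∃ r : ℕ, ∀ x, ‖f x‖ ≤ K * (1 + ‖x‖ ^ r) := by
  obtain ⟨C, hC, k, hf⟩ := hf
  refine ⟨C * 2 ^ k, by positivity, k, fun x ↦ (hf x).trans ?_⟩
  rw [mul_assoc]
  exact mul_le_mul_of_nonneg_left (one_add_norm_pow_le k x) hC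

theorem PolyLocLip.hasPolyGrowth {f : E → F} (hf : PolyLocLip f) : HasPolyGrowth f := by
  obtain ⟨K, hK, r, hf⟩ := hf
  refine ⟨‖f 0‖ + 3 * K, by positivity, r + 1, fun x ↦ ?_⟩
  have one_le (k : ℕ) : 1 ≤ (1 + ‖x‖) ^ k := one_le_pow₀ (by simp)
  have zero_pow_le : ‖(0 : E)‖ ^ r ≤ (1 + ‖x‖) ^ r := by
    rw [norm_zero]
    gcongr
    positivity
  calc ‖f x‖ ≤ ‖f 0‖ + ‖f x - f 0‖ := norm_le_norm_add_norm_sub' _ _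
    _ ≤ ‖f 0‖ + K * (1 + ‖x‖ ^ r + ‖(0 : E)‖ ^ r) * ‖x‖ := by
        gcongr
        simpa using hf x 0
    _ ≤ ‖f 0‖ * (1 + ‖x‖) ^ (r + 1)
          + K * ((1 + ‖x‖) ^ r + (1 + ‖x‖) ^ r + (1 + ‖x‖) ^ r) * (1 + ‖x‖) := by
        gcongr
        · exact le_mul_of_one_le_right (norm_nonneg _) (one_le _)
        · exact one_le r
        · simp
        · simp
    _ = (‖f 0‖ + 3 * K) * (1 + ‖x‖) ^ (r + 1) := by ring

theorem exists_linear_growth_of_lipschitz {V : E → F} (hV : ∃ L : NNReal, LipschitzWith L V) :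
    ∃ A : ℝ, ∀ x, ‖V x‖ ≤ A * (1 + ‖x‖) := by
  obtain ⟨L, hL⟩ := hV
  refine ⟨‖V 0‖ + L, fun x ↦ ?_⟩
  calc ‖V x‖ ≤ ‖V 0‖ + ‖V x - V 0‖ := norm_le_norm_add_norm_sub' _ _
    _ ≤ ‖V 0‖ + L * ‖x‖ := by gcongr; simpa using hL.norm_sub_le x 0
    _ ≤ (‖V 0‖ + L) * (1 + ‖x‖) := by
        nlinarith [mul_nonneg (norm_nonneg (V 0)) (norm_nonneg x), L.coe_nonneg]

namespace IsPolyBigO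

variable {T : ℝ} {m : ℕ} {f g : ℝ → X → F}

protected theorem add (hf : IsPolyBigO T m f) (hg : IsPolyBigO T m g) :
    IsPolyBigO T m fun θ x ↦ f θ x + g θ x := by
  obtain ⟨C, hC, k, hf⟩ := hf
  obtain ⟨D, hD, l, hg⟩ := hg
  refine ⟨C + D, by positivity, max k l, fun θ hθ x ↦ ?_⟩
  have one_le : 1 ≤ 1 + ‖x‖ := by simp
  calc ‖f θ x + g θ x‖ ≤ ‖f θ x‖ + ‖g θ x‖ := norm_add_le _ _
    _ ≤ C * (1 + ‖x‖) ^ max k l * |θ| ^ m + D * (1 + ‖x‖) ^ max k l * |θ| ^ m := by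
        gcongr
        · exact (hf θ hθ x).trans (by gcongr; exact le_max_left k l)
        · exact (hg θ hθ x).trans (by gcongr; exact le_max_right k l)
    _ = (C + D) * (1 + ‖x‖) ^ max k l * |θ| ^ m := by ring

theorem of_succ (hT : 0 ≤ T) (hf : IsPolyBigO T (m + 1) f) : IsPolyBigO T m f := by
  obtain ⟨C, hC, k, hf⟩ := hf
  refine ⟨C * T, by positivity, k, fun θ hθ x ↦ (hf θ hθ x).trans ?_⟩
  have : |θ| ≤ T := abs_le.2 hθ
  calc C * (1 + ‖x‖) ^ k * |θ| ^ (m + 1) = C * |θ| * (1 + ‖x‖) ^ k * |θ| ^ m := by ring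
    _ ≤ C * T * (1 + ‖x‖) ^ k * |θ| ^ m := by gcongr

protected theorem zero : IsPolyBigO T m fun _ (_ : X) ↦ (0 : F) :=
  ⟨0, le_rfl, 0, by simp⟩

protected theorem sum {ι : Type*} (s : Finset ι) {f : ι → ℝ → X → F}
    (hf : ∀ i ∈ s, IsPolyBigO T m (f i)) : IsPolyBigO T m fun θ x ↦ ∑ i ∈ s, f i θ x := by
  classical
  induction s using Finset.induction_on with
  | empty => simpa using IsPolyBigO.zero
  | insert i s his ih =>
    simp only [Finset.sum_insert his]
    exact (hf i (by simp)).add (ih fun j hj ↦ hf j (by simp [hj]))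

theorem hasPolyGrowth (hf : IsPolyBigO T 0 f) {θ : ℝ} (hθ : θ ∈ Icc (-T) T) :
    HasPolyGrowth (f θ) := by
  obtain ⟨C, hC, k, hf⟩ := hf
  exact ⟨C, hC, k, fun x ↦ by simpa using hf θ hθ x⟩

theorem exists_le_one_add_norm_pow (hf : IsPolyBigO T m f) :
    ∃ C : ℝ, 0 < C ∧ ∃ q : ℕ, 1 ≤ q ∧
      ∀ θ ∈ Icc (-T) T, ∀ x, ‖f θ x‖ ≤ C * (1 + ‖x‖ ^ q) * |θ| ^ m := by
  obtain ⟨C, hC, k, hf⟩ := hf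
  refine ⟨(C + 1) * 2 ^ (k + 1), by positivity, k + 1, by simp, fun θ hθ x ↦ ?_⟩
  calc ‖f θ x‖ ≤ C * (1 + ‖x‖) ^ k * |θ| ^ m := hf θ hθ x
    _ ≤ (C + 1) * (1 + ‖x‖) ^ (k + 1) * |θ| ^ m := by gcongr <;> simp
    _ ≤ (C + 1) * (2 ^ (k + 1) * (1 + ‖x‖ ^ (k + 1))) * |θ| ^ m := by
        gcongr
        exact one_add_norm_pow_le _ x
    _ = (C + 1) * 2 ^ (k + 1) * (1 + ‖x‖ ^ (k + 1)) * |θ| ^ m := by ring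

end IsPolyBigO

theorem HasPolyGrowth.isPolyBigO {W : X → F} (T : ℝ) (hW : HasPolyGrowth W) :
    IsPolyBigO T 0 fun _ ↦ W := by
  obtain ⟨C, hC, k, hW⟩ := hW
  exact ⟨C, hC, k, fun θ _ x ↦ by simpa using hW x⟩

theorem HasPolyGrowth.comp_isPolyBigO {T : ℝ} {W : E → F} {u : ℝ → X → E} (hW : HasPolyGrowth W)
    (hu : IsPolyBigO T 0 u) : IsPolyBigO T 0 fun θ x ↦ W (u θ x) := by
  obtain ⟨C, hC, k, hW⟩ := hW
  obtain ⟨D, hD, l, hu⟩ := hu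
  refine ⟨C * (1 + D) ^ k, by positivity, l * k, fun θ hθ x ↦ (hW _).trans ?_⟩
  have one_le : 1 ≤ (1 + ‖x‖) ^ l := one_le_pow₀ (by simp)
  have norm_le : ‖u θ x‖ ≤ D * (1 + ‖x‖) ^ l := by simpa using hu θ hθ x
  calc C * (1 + ‖u θ x‖) ^ k ≤ C * ((1 + D) * (1 + ‖x‖) ^ l) ^ k := by gcongr; linarith
    _ = C * (1 + D) ^ k * (1 + ‖x‖) ^ (l * k) * |θ| ^ 0 := by rw [mul_pow, pow_mul]; ring

end Norm

section Deriv

variable {X E F : Type*} [NormedAddCommGroup X]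
  [NormedAddCommGroup E] [NormedSpace ℝ E] [NormedAddCommGroup F] [NormedSpace ℝ F]

/-- The finite-order analogue of `Function.HasTemperateGrowth`: `W` is of class `C^m` and its
derivatives of order at most `m` have polynomial growth. -/
structure HasTemperateGrowthUpTo (m : ℕ) (W : E → F) : Prop where
  contDiff : ContDiff ℝ m W
  growth : ∀ n ≤ m, HasPolyGrowth (iteratedFDeriv ℝ n W)

theorem HasPolyGrowth.of_fderiv {f : E → F} (hd : Differentiable ℝ f)
    (hf : HasPolyGrowth (fderiv ℝ f)) : HasPolyGrowth f := by
  obtain ⟨C, hC, k, hf⟩ := hf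
  refine ⟨‖f 0‖ + C, by positivity, k + 1, fun x ↦ ?_⟩
  have mean_value : ‖f x - f 0‖ ≤ C * (1 + ‖x‖) ^ k * ‖x - 0‖ := by
    refine (convex_closedBall (0 : E) ‖x‖).norm_image_sub_le_of_norm_fderiv_le (𝕜 := ℝ)
      (fun y _ ↦ hd y) (fun y hy ↦ (hf y).trans ?_) (by simp) (by simp)
    have : ‖y‖ ≤ ‖x‖ := by simpa using hy
    gcongr
  have one_le : 1 ≤ (1 + ‖x‖) ^ (k + 1) := one_le_pow₀ (by simp)
  calc ‖f x‖ ≤ ‖f 0‖ + ‖f x - f 0‖ := norm_le_norm_add_norm_sub' _ _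
    _ ≤ ‖f 0‖ * (1 + ‖x‖) ^ (k + 1) + C * (1 + ‖x‖) ^ k * (1 + ‖x‖) := by
        rw [sub_zero] at mean_value
        gcongr
        · exact le_mul_of_one_le_right (norm_nonneg _) one_le
        · exact mean_value.trans (by gcongr; simp)
    _ = (‖f 0‖ + C) * (1 + ‖x‖) ^ (k + 1) := by ring

theorem HasTemperateGrowthUpTo.of_iteratedFDeriv {m : ℕ} {W : E → F} (hW : ContDiff ℝ m W)
    (hm : HasPolyGrowth (iteratedFDeriv ℝ m W)) : HasTemperateGrowthUpTo m W := by
  refine ⟨hW, fun n hn ↦ Nat.decreasingInduction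
    (motive := fun n _ ↦ HasPolyGrowth (iteratedFDeriv ℝ n W)) (fun n hn ih ↦ ?_) hm hn⟩
  refine .of_fderiv (hW.differentiable_iteratedFDeriv (by exact_mod_cast hn)) ?_
  simpa only [HasPolyGrowth, norm_fderiv_iteratedFDeriv] using ih

theorem HasTemperateGrowthUpTo.of_le {m n : ℕ} {W : E → F} (hW : HasTemperateGrowthUpTo m W)
    (hnm : n ≤ m) : HasTemperateGrowthUpTo n W :=
  ⟨hW.contDiff.of_le (by exact_mod_cast hnm), fun j hj ↦ hW.growth j (hj.trans hnm)⟩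

namespace IsPolyBigO

variable {T : ℝ} {m : ℕ} {f : ℝ → X → F}

protected theorem const_smul (c : ℝ) (hf : IsPolyBigO T m f) :
    IsPolyBigO T m fun θ x ↦ c • f θ x := by
  obtain ⟨C, hC, k, hf⟩ := hf
  refine ⟨|c| * C, by positivity, k, fun θ hθ x ↦ ?_⟩
  calc ‖c • f θ x‖ = |c| * ‖f θ x‖ := by rw [norm_smul, Real.norm_eq_abs]
    _ ≤ |c| * (C * (1 + ‖x‖) ^ k * |θ| ^ m) := by gcongr; exact hf θ hθ x
    _ = |c| * C * (1 + ‖x‖) ^ k * |θ| ^ m := by ring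

theorem time_smul (hf : IsPolyBigO T m f) : IsPolyBigO T (m + 1) fun θ x ↦ θ • f θ x := by
  obtain ⟨C, hC, k, hf⟩ := hf
  refine ⟨C, hC, k, fun θ hθ x ↦ ?_⟩
  calc ‖θ • f θ x‖ = |θ| * ‖f θ x‖ := by rw [norm_smul, Real.norm_eq_abs]
    _ ≤ |θ| * (C * (1 + ‖x‖) ^ k * |θ| ^ m) := by gcongr; exact hf θ hθ x
    _ = C * (1 + ‖x‖) ^ k * |θ| ^ (m + 1) := by ring

theorem multilinear_apply {ι : Type*} [Fintype ι]
    {M : ℝ → X → ContinuousMultilinearMap ℝ (fun _ : ι ↦ E) F} {u : ι → ℝ → X → E}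
    (hM : IsPolyBigO T 0 M) (hu : ∀ i, IsPolyBigO T 0 (u i)) :
    IsPolyBigO T 0 fun θ x ↦ M θ x fun i ↦ u i θ x := by
  obtain ⟨C, hC, k, hM⟩ := hM
  choose D hD l hu using hu
  refine ⟨C * ∏ i, D i, mul_nonneg hC (Finset.prod_nonneg fun i _ ↦ hD i), k + ∑ i, l i,
    fun θ hθ x ↦ ?_⟩
  simp only [pow_zero, mul_one] at hM hu ⊢
  calc ‖M θ x fun i ↦ u i θ x‖ ≤ ‖M θ x‖ * ∏ i, ‖u i θ x‖ := (M θ x).le_opNorm _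
    _ ≤ C * (1 + ‖x‖) ^ k * ∏ i, D i * (1 + ‖x‖) ^ l i := by
        gcongr with i
        · exact hM θ hθ x
        · exact hu i θ hθ x
    _ = C * (∏ i, D i) * (1 + ‖x‖) ^ (k + ∑ i, l i) := by
        rw [Finset.prod_mul_distrib, Finset.prod_pow_eq_pow_sum, pow_add]
        ring

theorem of_deriv {f : ℝ → X → E} (hf₀ : ∀ x, f 0 x = 0)
    (hd : ∀ x, Differentiable ℝ fun t ↦ f t x)
    (hf' : IsPolyBigO T m fun t x ↦ deriv (fun s ↦ f s x) t) : IsPolyBigO T (m + 1) f := by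
  obtain ⟨C, hC, k, hf'⟩ := hf'
  refine ⟨C, hC, k, fun θ hθ x ↦ ?_⟩
  have mean_value : ‖f θ x - f 0 x‖ ≤ C * (1 + ‖x‖) ^ k * |θ| ^ m * ‖θ - 0‖ := by
    refine (convex_closedBall (0 : ℝ) |θ|).norm_image_sub_le_of_norm_deriv_le
      (fun t _ ↦ hd x t) (fun t ht ↦ ?_) (by simp) (by simp)
    have abs_le_abs : |t| ≤ |θ| := by simpa using ht
    exact (hf' t (abs_le.1 (abs_le_abs.trans (abs_le.2 hθ))) x).trans (by gcongr)
  calc ‖f θ x‖ ≤ C * (1 + ‖x‖) ^ k * |θ| ^ m * |θ| := by simpa [hf₀] using mean_value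
    _ = C * (1 + ‖x‖) ^ k * |θ| ^ (m + 1) := by ring

end IsPolyBigO

/-- A family of curves `t ↦ f t x` of class `C^m` whose time derivatives of order at most `m` are
bounded polynomially in `x`, uniformly over `[-T, T]`, and depend continuously on `x` at time `0`;
that is what a Taylor expansion in time with good coefficients and remainder requires. -/
structure IsTemperateFamily (T : ℝ) (m : ℕ) (f : ℝ → X → E) : Prop where
  contDiff : ∀ x, ContDiff ℝ m fun t ↦ f t x
  growth : ∀ n ≤ m, IsPolyBigO T 0 fun t x ↦ iteratedDeriv n (fun s ↦ f s x) t
  continuous_zero : ∀ n ≤ m, Continuous fun x ↦ iteratedDeriv n (fun s ↦ f s x) 0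

theorem iteratedDeriv_id_smul {𝕜 G : Type*} [NontriviallyNormedField 𝕜] [NormedAddCommGroup G]
    [NormedSpace 𝕜 G] {k : 𝕜 → G} {n : ℕ} (hk : ContDiff 𝕜 (n + 1 : ℕ) k) (t : 𝕜) :
    iteratedDeriv (n + 1) (fun s ↦ s • k s) t =
      t • iteratedDeriv (n + 1) k t + (n + 1 : 𝕜) • iteratedDeriv n k t := by
  induction n generalizing t with
  | zero =>
    have hd : DifferentiableAt 𝕜 k t := hk.differentiable (by simp) t
    simpa using ((hasDerivAt_id t).fun_smul hd.hasDerivAt).deriv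
  | succ n ih =>
    have hd (j : ℕ) (hj : j < n + 2) :
        HasDerivAt (iteratedDeriv j k) (iteratedDeriv (j + 1) k t) t := by
      rw [iteratedDeriv_succ]
      exact (hk.differentiable_iteratedDeriv j (by exact_mod_cast hj) t).hasDerivAt
    rw [iteratedDeriv_succ, funext (ih (hk.of_le (by norm_cast; lia)))]
    have leibniz := ((hasDerivAt_id t).fun_smul (hd (n + 1) (by lia))).fun_add
      ((hd n (by lia)).fun_const_smul (n + 1 : 𝕜))
    refine leibniz.deriv.trans ?_
    push_cast
    simp only [id]
    module

namespace IsTemperateFamily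

variable {T : ℝ} {m : ℕ} {f g : ℝ → X → E}

theorem of_le {n : ℕ} (hf : IsTemperateFamily T m f) (hnm : n ≤ m) : IsTemperateFamily T n f where
  contDiff x := (hf.contDiff x).of_le (by exact_mod_cast hnm)
  growth j hj := hf.growth j (hj.trans hnm)
  continuous_zero j hj := hf.continuous_zero j (hj.trans hnm)

theorem const {W : X → E} (hW : HasPolyGrowth W) (hc : Continuous W) :
    IsTemperateFamily T m fun _ ↦ W where
  contDiff _ := contDiff_const
  growth n _ := by
    rcases n with _ | n
    · simpa using hW.isPolyBigO T
    · simpa [iteratedDeriv_const] using IsPolyBigO.zero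
  continuous_zero n _ := by
    rcases n with _ | n
    · simpa using hc
    · simpa [iteratedDeriv_const] using continuous_const

protected theorem add (hf : IsTemperateFamily T m f) (hg : IsTemperateFamily T m g) :
    IsTemperateFamily T m fun t x ↦ f t x + g t x := by
  have iteratedDeriv_add (n : ℕ) (hn : n ≤ m) (t : ℝ) (x : X) :
      iteratedDeriv n (fun s ↦ f s x + g s x) t =
        iteratedDeriv n (fun s ↦ f s x) t + iteratedDeriv n (fun s ↦ g s x) t :=
    iteratedDeriv_fun_add ((hf.of_le hn).contDiff x).contDiffAt
      ((hg.of_le hn).contDiff x).contDiffAt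
  refine ⟨fun x ↦ (hf.contDiff x).add (hg.contDiff x), fun n hn ↦ ?_, fun n hn ↦ ?_⟩ <;>
    simp only [iteratedDeriv_add n hn]
  · exact (hf.growth n hn).add (hg.growth n hn)
  · exact (hf.continuous_zero n hn).add (hg.continuous_zero n hn)

protected theorem const_smul (c : ℝ) (hf : IsTemperateFamily T m f) :
    IsTemperateFamily T m fun t x ↦ c • f t x where
  contDiff x := (hf.contDiff x).const_smul c
  growth n hn := by simpa using (hf.growth n hn).const_smul c
  continuous_zero n hn := by simpa using! (hf.continuous_zero n hn).const_smul c

theorem time_smul (hT : 0 ≤ T) (hf : IsTemperateFamily T m f) :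
    IsTemperateFamily T m fun t x ↦ t • f t x where
  contDiff x := contDiff_id.smul (hf.contDiff x)
  growth n hn := by
    rcases n with _ | n
    · simpa using ((hf.growth 0 hn).time_smul).of_succ hT
    · simp only [iteratedDeriv_id_smul ((hf.of_le hn).contDiff _)]
      exact (((hf.growth _ hn).time_smul).of_succ hT).add
        ((hf.growth n (Nat.le_of_succ_le hn)).const_smul _)
  continuous_zero n hn := by
    rcases n with _ | n
    · simpa using continuous_const
    · simpa [iteratedDeriv_id_smul ((hf.of_le hn).contDiff _)] using!
        (hf.continuous_zero n (Nat.le_of_succ_le hn)).const_smul (n + 1 : ℝ)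

theorem comp {W : E → F} (hW : HasTemperateGrowthUpTo m W) (hf : IsTemperateFamily T m f) :
    IsTemperateFamily T m fun t x ↦ W (f t x) := by
  have faa_di_bruno (n : ℕ) (hn : n ≤ m) (t : ℝ) (x : X) :
      iteratedDeriv n (fun s ↦ W (f s x)) t = ∑ c : OrderedFinpartition n,
        iteratedFDeriv ℝ c.length W (f t x) fun j ↦
          iteratedDeriv (c.partSize j) (fun s ↦ f s x) t :=
    iteratedDeriv_vcomp_eq_sum_orderedFinpartition hW.contDiff.contDiffAt
      (hf.contDiff x).contDiffAt (by exact_mod_cast hn)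
  have partSize_le {n : ℕ} (hn : n ≤ m) (c : OrderedFinpartition n) (j : Fin c.length) :
      c.partSize j ≤ m := (c.partSize_le j).trans hn
  have length_le {n : ℕ} (hn : n ≤ m) (c : OrderedFinpartition n) : c.length ≤ m :=
    c.length_le.trans hn
  refine ⟨fun x ↦ hW.contDiff.comp (hf.contDiff x), fun n hn ↦ ?_, fun n hn ↦ ?_⟩ <;>
    simp only [faa_di_bruno n hn]
  · have hf₀ : IsPolyBigO T 0 f := by simpa using hf.growth 0 m.zero_le
    exact .sum _ fun c _ ↦ .multilinear_apply
      ((hW.growth _ (length_le hn c)).comp_isPolyBigO hf₀)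
      fun j ↦ hf.growth _ (partSize_le hn c j)
  · have hf₀ : Continuous (f 0) := by simpa using hf.continuous_zero 0 m.zero_le
    refine continuous_finsetSum _ fun c _ ↦ ?_
    have hWc := hW.contDiff.continuous_iteratedFDeriv
      (by exact_mod_cast length_le hn c : ((c.length : ℕ) : WithTop ℕ∞) ≤ m)
    exact (hWc.comp hf₀).eval (continuous_pi fun j ↦ hf.continuous_zero _ (partSize_le hn c j))

theorem of_hasDerivAt {f' : ℝ → X → E} (hf : IsPolyBigO T 0 f) (hc : Continuous (f 0))
    (hd : ∀ t x, HasDerivAt (fun s ↦ f s x) (f' t x) t) (hf' : IsTemperateFamily T m f') :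
    IsTemperateFamily T (m + 1) f := by
  have deriv_eq (x : X) : deriv (fun s ↦ f s x) = fun t ↦ f' t x := funext fun t ↦ (hd t x).deriv
  refine ⟨fun x ↦ ?_, fun n hn ↦ ?_, fun n hn ↦ ?_⟩
  · rw [Nat.cast_add_one, contDiff_succ_iff_deriv, deriv_eq]
    exact ⟨fun t ↦ (hd t x).differentiableAt, by simp, hf'.contDiff x⟩
  all_goals rcases n with _ | n
  · simpa using hf
  · simpa only [iteratedDeriv_succ', deriv_eq] using hf'.growth n (by lia)
  · simpa using hc
  · simpa only [iteratedDeriv_succ', deriv_eq] using hf'.continuous_zero n (by lia)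

protected theorem deriv (hf : IsTemperateFamily T (m + 1) f) :
    IsTemperateFamily T m fun t x ↦ deriv (fun s ↦ f s x) t where
  contDiff x := (contDiff_succ_iff_deriv.1 (hf.contDiff x)).2.2
  growth n hn := by simpa only [iteratedDeriv_succ'] using hf.growth (n + 1) (by lia)
  continuous_zero n hn := by
    simpa only [iteratedDeriv_succ'] using hf.continuous_zero (n + 1) (by lia)

open Nat Finset in
theorem isPolyBigO_sub_taylor (hf : IsTemperateFamily T m f) :
    IsPolyBigO T m fun θ x ↦
      f θ x - ∑ n ∈ range m, (θ ^ n / n !) • iteratedDeriv n (fun t ↦ f t x) 0 := by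
  induction m generalizing f with
  | zero => simpa using hf.growth 0 le_rfl
  | succ m ih =>
    have hasDerivAt_pow_div (n : ℕ) (t : ℝ) :
        HasDerivAt (fun s : ℝ ↦ s ^ (n + 1) / (n + 1)!) (t ^ n / n !) t := by
      refine ((hasDerivAt_pow (n + 1) t).div_const ((n + 1)! : ℝ)).congr_deriv ?_
      rw [factorial_succ]
      push_cast
      field_simp
    have hasDerivAt_remainder (x : X) (t : ℝ) : HasDerivAt
        (fun s ↦ f s x - ∑ n ∈ range (m + 1), (s ^ n / n !) • iteratedDeriv n (fun t ↦ f t x) 0)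
        (deriv (fun s ↦ f s x) t - ∑ n ∈ range m, (t ^ n / n !) •
          iteratedDeriv n (deriv fun t ↦ f t x) 0) t := by
      simp only [sum_range_succ', pow_zero, factorial_zero, cast_one, div_one, one_smul,
        iteratedDeriv_succ', ← sub_sub]
      refine HasDerivAt.sub_const _ (.sub ?_ (.fun_sum fun n _ ↦ ?_))
      · exact ((hf.contDiff x).differentiable (by simp) t).hasDerivAt
      · exact (hasDerivAt_pow_div n t).smul_const _
    refine .of_deriv (fun x ↦ ?_) (fun x t ↦ (hasDerivAt_remainder x t).differentiableAt) ?_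
    · simp [sum_range_succ']
    · simpa only [(hasDerivAt_remainder _ _).deriv] using ih hf.deriv

end IsTemperateFamily

end Deriv

section Flow

variable {E : Type*} [NormedAddCommGroup E] [NormedSpace ℝ E]

theorem one_add_norm_le_mul_exp {u u' : ℝ → E} {A : ℝ} (hu : ∀ t, HasDerivAt u (u' t) t)
    (hu' : ∀ t, ‖u' t‖ ≤ A * (1 + ‖u t‖)) (t : ℝ) :
    1 + ‖u t‖ ≤ (1 + ‖u 0‖) * Real.exp (A * |t|) := by
  wlog ht : 0 ≤ t generalizing u u' t
  · have hu_neg (s : ℝ) : HasDerivAt (fun s ↦ u (-s)) (-u' (-s)) s := by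
      simpa using! (hu (-s)).scomp s (hasDerivAt_neg s)
    simpa using this hu_neg (fun s ↦ by simpa using hu' (-s)) (-t) (by linarith)
  have gronwall := norm_le_gronwallBound_of_norm_deriv_right_le (K := A) (ε := A)
    (fun s _ ↦ (hu s).continuousAt.continuousWithinAt) (fun s _ ↦ (hu s).hasDerivWithinAt)
    le_rfl (fun s _ ↦ (hu' s).trans_eq (by ring)) t ⟨ht, le_rfl⟩
  rw [abs_of_nonneg ht]
  rcases eq_or_ne A 0 with rfl | hA
  · simpa [gronwallBound_K0] using gronwall
  · simp only [gronwallBound_of_K_ne_0 hA, div_self hA, sub_zero] at gronwall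
    linarith

variable {V : E → E} {φ : ℝ → E → E}

theorem isPolyBigO_flow (T : ℝ) (hV : ∃ A : ℝ, ∀ x, ‖V x‖ ≤ A * (1 + ‖x‖)) (hφ₀ : ∀ x, φ 0 x = x)
    (hφ : ∀ x t, HasDerivAt (fun s ↦ φ s x) (V (φ t x)) t) : IsPolyBigO T 0 φ := by
  obtain ⟨A, hV⟩ := hV
  refine ⟨Real.exp (|A| * T), by positivity, 1, fun t ht x ↦ ?_⟩
  have hA (t : ℝ) : ‖V (φ t x)‖ ≤ |A| * (1 + ‖φ t x‖) :=
    (hV _).trans (by gcongr; exact le_abs_self A)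
  have abs_le_T : |t| ≤ T := abs_le.2 ht
  calc ‖φ t x‖ ≤ 1 + ‖φ t x‖ := by simp
    _ ≤ (1 + ‖x‖) * Real.exp (|A| * |t|) := by
        simpa [hφ₀] using one_add_norm_le_mul_exp (hφ x) hA t
    _ ≤ (1 + ‖x‖) * Real.exp (|A| * T) := by gcongr
    _ = Real.exp (|A| * T) * (1 + ‖x‖) ^ 1 * |t| ^ 0 := by ring

theorem IsTemperateFamily.flow {T : ℝ} {m : ℕ} (hV : HasTemperateGrowthUpTo m V)
    (hA : ∃ A : ℝ, ∀ x, ‖V x‖ ≤ A * (1 + ‖x‖)) (hφ₀ : ∀ x, φ 0 x = x)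
    (hφ : ∀ x t, HasDerivAt (fun s ↦ φ s x) (V (φ t x)) t) : IsTemperateFamily T (m + 1) φ := by
  have growth_zero : IsPolyBigO T 0 φ := isPolyBigO_flow T hA hφ₀ hφ
  have continuous_at_zero : Continuous (φ 0) := continuous_id.congr fun x ↦ (hφ₀ x).symm
  suffices ∀ n ≤ m + 1, IsTemperateFamily T n φ from this _ le_rfl
  intro n hn
  induction n with
  | zero =>
    have hφ_cont (x : E) : Continuous fun t ↦ φ t x :=
      continuous_iff_continuousAt.2 fun t ↦ (hφ x t).continuousAt
    exact ⟨by simpa using hφ_cont, by simpa using growth_zero, by simpa using continuous_at_zero⟩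
  | succ n ih =>
    exact .of_hasDerivAt growth_zero continuous_at_zero (fun t x ↦ hφ x t)
      (.comp (hV.of_le (by lia)) (ih (by lia)))

theorem iteratedDeriv_succ_flow (hφ : ∀ x t, HasDerivAt (fun s ↦ φ s x) (V (φ t x)) t) (n : ℕ)
    (x : E) (t : ℝ) :
    iteratedDeriv (n + 1) (fun s ↦ φ s x) t = iteratedDeriv n (V ∘ fun s ↦ φ s x) t := by
  rw [iteratedDeriv_succ', funext fun t ↦ (hφ x t).deriv]
  rfl

end Flow

section RungeKutta

variable {E : Type*} [NormedAddCommGroup E] [NormedSpace ℝ E]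

/-- The Runge–Kutta stage that evaluates `V` at the point reached from `x` in time `a * θ` with the
slope `k θ x`. -/
def rkStage (V : E → E) (a : ℝ) (k : ℝ → E → E) (θ : ℝ) (x : E) : E :=
  V (x + a • θ • k θ x)

/-- The weighted slope `k₁ + 2k₂ + 2k₃ + k₄` of the classical fourth-order Runge–Kutta scheme; the
scheme itself is `x + (θ / 6) • rk4Slope V θ x`. -/
def rk4Slope (V : E → E) (θ : ℝ) (x : E) : E :=
  let k₁ : ℝ → E → E := fun _ ↦ V
  let k₂ := rkStage V (1 / 2) k₁
  let k₃ := rkStage V (1 / 2) k₂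
  let k₄ := rkStage V 1 k₃
  k₁ θ x + (2 : ℝ) • k₂ θ x + (2 : ℝ) • k₃ θ x + k₄ θ x

theorem rk4_eq_add_smul_rk4Slope {n : ℕ} (V : Vec n → Vec n) (θ : ℝ) (x : Vec n) :
    rk4 V θ x = x + (θ / 6) • rk4Slope V θ x := by
  simp [rk4, rk4Slope, rkStage, smul_smul, div_eq_inv_mul]

variable {V : E → E} {T : ℝ} {m : ℕ}

protected theorem IsTemperateFamily.rkStage {k : ℝ → E → E} (hT : 0 ≤ T)
    (hV : HasTemperateGrowthUpTo m V) (a : ℝ) (hk : IsTemperateFamily T m k) :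
    IsTemperateFamily T m (rkStage V a k) :=
  have hid : HasPolyGrowth fun x : E ↦ x := ⟨1, zero_le_one, 1, by simp⟩
  .comp hV (.add (.const hid continuous_id) ((hk.time_smul hT).const_smul a))

protected theorem IsTemperateFamily.rk4Slope (hT : 0 ≤ T) (hV : HasTemperateGrowthUpTo m V) :
    IsTemperateFamily T m (rk4Slope V) := by
  have hV₀ : HasPolyGrowth V := by
    simpa [HasPolyGrowth] using hV.growth 0 m.zero_le
  have h₁ : IsTemperateFamily T m fun _ ↦ V := .const hV₀ hV.contDiff.continuous
  have h₂ := h₁.rkStage hT hV (1 / 2)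
  have h₃ := h₂.rkStage hT hV (1 / 2)
  have h₄ := h₃.rkStage hT hV 1
  exact ((h₁.add (h₂.const_smul 2)).add (h₃.const_smul 2)).add h₄

section Jets

theorem iteratedDeriv_succ_add_smul_id_smul {k : ℝ → E} {n : ℕ} (hk : ContDiff ℝ (n + 1 : ℕ) k)
    (a : ℝ) (x : E) :
    iteratedDeriv (n + 1) (fun t ↦ x + a • t • k t) 0 = (a * (n + 1)) • iteratedDeriv n k 0 := by
  rw [iteratedDeriv_const_add n.succ_pos, iteratedDeriv_fun_const_smul_field,
    iteratedDeriv_id_smul hk, zero_smul, zero_add, smul_smul]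

variable {k : ℝ → E → E} {a : ℝ} {x : E}

theorem deriv_rkStage (hV : ContDiff ℝ 1 V) (hk : ContDiff ℝ 1 fun t ↦ k t x) :
    deriv (fun t ↦ rkStage V a k t x) 0 = a • fderiv ℝ V x (k 0 x) := by
  have hp : ContDiff ℝ 1 fun t ↦ x + a • t • k t x := by fun_prop
  have chain := fderiv_comp_deriv (0 : ℝ) (hV.differentiable one_ne_zero _)
    (hp.differentiable one_ne_zero 0)
  have h₁ := iteratedDeriv_succ_add_smul_id_smul (n := 0) hk a x
  refine chain.trans ?_
  rw [← iteratedDeriv_one, h₁]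
  simp

theorem iteratedDeriv_two_rkStage (hV : ContDiff ℝ 2 V) (hk : ContDiff ℝ 2 fun t ↦ k t x) :
    iteratedDeriv 2 (fun t ↦ rkStage V a k t x) 0 =
      a ^ 2 • fderiv ℝ (fderiv ℝ V) x (k 0 x) (k 0 x) +
        (2 * a) • fderiv ℝ V x (deriv (fun t ↦ k t x) 0) := by
  have hp : ContDiff ℝ 2 fun t ↦ x + a • t • k t x := by fun_prop
  have chain := iteratedDeriv_vcomp_two (x := 0) hV.contDiffAt hp.contDiffAt
  have h₁ := iteratedDeriv_succ_add_smul_id_smul (n := 0) (hk.of_le (by norm_num)) a x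
  have h₂ := iteratedDeriv_succ_add_smul_id_smul (n := 1) hk a x
  refine chain.trans ?_
  rw [← iteratedDeriv_one, h₁, h₂]
  simp only [Nat.cast_zero, zero_smul, smul_zero, add_zero, zero_add, mul_one, iteratedDeriv_zero,
    iteratedDeriv_one, iteratedFDeriv_two_apply, map_smul, smul_apply]
  module

theorem iteratedDeriv_three_rkStage (hV : ContDiff ℝ 3 V) (hk : ContDiff ℝ 3 fun t ↦ k t x) :
    iteratedDeriv 3 (fun t ↦ rkStage V a k t x) 0 =
      a ^ 3 • iteratedFDeriv ℝ 3 V x (fun _ ↦ k 0 x) +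
        (2 * a ^ 2) • fderiv ℝ (fderiv ℝ V) x (deriv (fun t ↦ k t x) 0) (k 0 x) +
        (4 * a ^ 2) • fderiv ℝ (fderiv ℝ V) x (k 0 x) (deriv (fun t ↦ k t x) 0) +
        (3 * a) • fderiv ℝ V x (iteratedDeriv 2 (fun t ↦ k t x) 0) := by
  have hp : ContDiff ℝ 3 fun t ↦ x + a • t • k t x := by fun_prop
  have chain := iteratedDeriv_vcomp_three (x := 0) hV.contDiffAt hp.contDiffAt
  have h₁ := iteratedDeriv_succ_add_smul_id_smul (n := 0) (hk.of_le (by norm_num)) a x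
  have h₂ := iteratedDeriv_succ_add_smul_id_smul (n := 1) (hk.of_le (by norm_num)) a x
  have h₃ := iteratedDeriv_succ_add_smul_id_smul (n := 2) hk a x
  have cube := (iteratedFDeriv ℝ 3 V x).map_smul_univ (fun _ ↦ a) fun _ ↦ k 0 x
  refine chain.trans ?_
  rw [← iteratedDeriv_one, h₁, h₂, h₃]
  simp only [Finset.prod_const, Finset.card_univ, Fintype.card_fin, Nat.cast_zero, zero_smul,
    smul_zero, add_zero, zero_add, mul_one, iteratedDeriv_zero, iteratedDeriv_one,
    iteratedFDeriv_two_apply, Matrix.cons_val_zero, Matrix.cons_val_one, map_smul,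
    smul_apply] at cube ⊢
  rw [cube]
  module

end Jets

section OrderConditions

variable {φ : ℝ → E → E}

theorem contDiff_rkStage {a : ℝ} {k : ℝ → E → E} {x : E} (hV : ContDiff ℝ m V)
    (hk : ContDiff ℝ m fun t ↦ k t x) : ContDiff ℝ m fun t ↦ rkStage V a k t x :=
  hV.comp (by fun_prop)

theorem iteratedDeriv_rk4Slope (hV : ContDiff ℝ m V) (x : E) :
    iteratedDeriv m (fun t ↦ rk4Slope V t x) 0 =
      iteratedDeriv m (fun _ : ℝ ↦ V x) 0 +
        (2 : ℝ) • iteratedDeriv m (fun t ↦ rkStage V (1 / 2) (fun _ ↦ V) t x) 0 +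
        (2 : ℝ) • iteratedDeriv m
          (fun t ↦ rkStage V (1 / 2) (rkStage V (1 / 2) fun _ ↦ V) t x) 0 +
        iteratedDeriv m
          (fun t ↦ rkStage V 1 (rkStage V (1 / 2) (rkStage V (1 / 2) fun _ ↦ V)) t x) 0 := by
  have h₁ : ContDiff ℝ m fun _ : ℝ ↦ V x := contDiff_const
  have h₂ := contDiff_rkStage (a := 1 / 2) (k := fun _ ↦ V) hV h₁
  have h₃ := contDiff_rkStage (a := 1 / 2) hV h₂
  have h₄ := contDiff_rkStage (a := 1) hV h₃
  simp only [rk4Slope]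
  rw [iteratedDeriv_fun_add (by fun_prop) (by fun_prop),
    iteratedDeriv_fun_add (by fun_prop) (by fun_prop),
    iteratedDeriv_fun_add (by fun_prop) (by fun_prop),
    iteratedDeriv_fun_const_smul_field, iteratedDeriv_fun_const_smul_field]

theorem rk4Slope_zero (x : E) : rk4Slope V 0 x = (6 : ℝ) • V x := by
  simp only [rk4Slope, rkStage, zero_smul, smul_zero, add_zero]
  module

theorem deriv_rk4Slope (hV : ContDiff ℝ 1 V) (x : E) :
    deriv (fun t ↦ rk4Slope V t x) 0 = (3 : ℝ) • fderiv ℝ V x (V x) := by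
  have slope := iteratedDeriv_rk4Slope (m := 1) hV x
  have h₁ : ContDiff ℝ 1 fun _ : ℝ ↦ V x := contDiff_const
  have h₂ := contDiff_rkStage (m := 1) (a := 1 / 2) (k := fun _ ↦ V) hV h₁
  have h₃ := contDiff_rkStage (m := 1) (a := 1 / 2) hV h₂
  simp only [iteratedDeriv_one, deriv_const] at slope
  rw [slope, deriv_rkStage hV h₁, deriv_rkStage hV h₂, deriv_rkStage hV h₃]
  simp only [rkStage, zero_smul, smul_zero, add_zero]
  module

theorem iteratedDeriv_two_rk4Slope (hV : ContDiff ℝ 2 V) (x : E) :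
    iteratedDeriv 2 (fun t ↦ rk4Slope V t x) 0 = (2 : ℝ) •
      (fderiv ℝ (fderiv ℝ V) x (V x) (V x) + fderiv ℝ V x (fderiv ℝ V x (V x))) := by
  have slope := iteratedDeriv_rk4Slope (m := 2) hV x
  have h₁ : ContDiff ℝ 2 fun _ : ℝ ↦ V x := contDiff_const
  have h₂ := contDiff_rkStage (m := 2) (a := 1 / 2) (k := fun _ ↦ V) hV h₁
  have h₃ := contDiff_rkStage (m := 2) (a := 1 / 2) hV h₂
  have hV₁ : ContDiff ℝ 1 V := hV.of_le (by norm_num)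
  rw [slope, iteratedDeriv_two_rkStage hV h₁, iteratedDeriv_two_rkStage hV h₂,
    iteratedDeriv_two_rkStage hV h₃, deriv_rkStage hV₁ (h₁.of_le (by norm_num)),
    deriv_rkStage hV₁ (h₂.of_le (by norm_num))]
  simp only [rkStage, deriv_const', iteratedDeriv_const, OfNat.ofNat_ne_zero, ↓reduceIte, zero_smul,
    smul_zero, add_zero, zero_add, map_zero, map_smul]
  module

theorem iteratedDeriv_three_rk4Slope (hV : ContDiff ℝ 3 V) (x : E) :
    iteratedDeriv 3 (fun t ↦ rk4Slope V t x) 0 = (3 / 2 : ℝ) •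
      (iteratedFDeriv ℝ 3 V x (fun _ ↦ V x) +
        fderiv ℝ (fderiv ℝ V) x (fderiv ℝ V x (V x)) (V x) +
        (2 : ℝ) • fderiv ℝ (fderiv ℝ V) x (V x) (fderiv ℝ V x (V x)) +
        fderiv ℝ V x
          (fderiv ℝ (fderiv ℝ V) x (V x) (V x) + fderiv ℝ V x (fderiv ℝ V x (V x)))) := by
  have slope := iteratedDeriv_rk4Slope (m := 3) hV x
  have h₁ : ContDiff ℝ 3 fun _ : ℝ ↦ V x := contDiff_const
  have h₂ := contDiff_rkStage (m := 3) (a := 1 / 2) (k := fun _ ↦ V) hV h₁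
  have h₃ := contDiff_rkStage (m := 3) (a := 1 / 2) hV h₂
  have hV₂ : ContDiff ℝ 2 V := hV.of_le (by norm_num)
  have hV₁ : ContDiff ℝ 1 V := hV.of_le (by norm_num)
  rw [slope, iteratedDeriv_three_rkStage hV h₁, iteratedDeriv_three_rkStage hV h₂,
    iteratedDeriv_three_rkStage hV h₃, iteratedDeriv_two_rkStage hV₂ (h₁.of_le (by norm_num)),
    iteratedDeriv_two_rkStage hV₂ (h₂.of_le (by norm_num)),
    deriv_rkStage hV₁ (h₁.of_le (by norm_num)), deriv_rkStage hV₁ (h₂.of_le (by norm_num))]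
  simp only [rkStage, deriv_const', iteratedDeriv_const, OfNat.ofNat_ne_zero, ↓reduceIte, zero_smul,
    smul_zero, add_zero, zero_add, map_zero, map_smul, map_add, smul_apply, zero_apply]
  module

theorem deriv_comp_flow (hV : ContDiff ℝ 1 V) (hφ₀ : ∀ x, φ 0 x = x)
    (hφ : ∀ x t, HasDerivAt (fun s ↦ φ s x) (V (φ t x)) t) (x : E) :
    deriv (V ∘ fun t ↦ φ t x) 0 = fderiv ℝ V x (V x) := by
  rw [fderiv_comp_deriv _ (hV.differentiable one_ne_zero _) (hφ x 0).differentiableAt,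
    (hφ x 0).deriv, hφ₀]

theorem iteratedDeriv_two_comp_flow (hV : ContDiff ℝ 2 V) (hφ₀ : ∀ x, φ 0 x = x)
    (hφ : ∀ x t, HasDerivAt (fun s ↦ φ s x) (V (φ t x)) t) {x : E}
    (hφ_smooth : ContDiff ℝ 2 fun t ↦ φ t x) :
    iteratedDeriv 2 (V ∘ fun t ↦ φ t x) 0 =
      fderiv ℝ (fderiv ℝ V) x (V x) (V x) + fderiv ℝ V x (fderiv ℝ V x (V x)) := by
  rw [iteratedDeriv_vcomp_two hV.contDiffAt hφ_smooth.contDiffAt, iteratedDeriv_succ_flow hφ,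
    iteratedDeriv_one, deriv_comp_flow (hV.of_le (by norm_num)) hφ₀ hφ, (hφ x 0).deriv, hφ₀,
    iteratedFDeriv_two_apply]

theorem iteratedDeriv_three_comp_flow (hV : ContDiff ℝ 3 V) (hφ₀ : ∀ x, φ 0 x = x)
    (hφ : ∀ x t, HasDerivAt (fun s ↦ φ s x) (V (φ t x)) t) {x : E}
    (hφ_smooth : ContDiff ℝ 3 fun t ↦ φ t x) :
    iteratedDeriv 3 (V ∘ fun t ↦ φ t x) 0 =
      iteratedFDeriv ℝ 3 V x (fun _ ↦ V x) +
        fderiv ℝ (fderiv ℝ V) x (fderiv ℝ V x (V x)) (V x) +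
        (2 : ℝ) • fderiv ℝ (fderiv ℝ V) x (V x) (fderiv ℝ V x (V x)) +
        fderiv ℝ V x
          (fderiv ℝ (fderiv ℝ V) x (V x) (V x) + fderiv ℝ V x (fderiv ℝ V x (V x))) := by
  have hV₂ : ContDiff ℝ 2 V := hV.of_le (by norm_num)
  rw [iteratedDeriv_vcomp_three hV.contDiffAt hφ_smooth.contDiffAt, iteratedDeriv_succ_flow hφ,
    iteratedDeriv_succ_flow hφ, iteratedDeriv_one, deriv_comp_flow (hV.of_le (by norm_num)) hφ₀ hφ,
    iteratedDeriv_two_comp_flow hV₂ hφ₀ hφ (hφ_smooth.of_le (by norm_num)), (hφ x 0).deriv, hφ₀]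
  simp [iteratedFDeriv_two_apply, two_smul]

theorem rk4_order_conditions (hV : ContDiff ℝ 3 V) (hφ₀ : ∀ x, φ 0 x = x)
    (hφ : ∀ x t, HasDerivAt (fun s ↦ φ s x) (V (φ t x)) t) {x : E}
    (hφ_smooth : ContDiff ℝ 3 fun t ↦ φ t x) {n : ℕ} (hn : n < 4) :
    iteratedDeriv (n + 1) (fun t ↦ φ t x) 0 =
      ((n + 1) / 6 : ℝ) • iteratedDeriv n (fun t ↦ rk4Slope V t x) 0 := by
  have hV₁ : ContDiff ℝ 1 V := hV.of_le (by norm_num)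
  have hV₂ : ContDiff ℝ 2 V := hV.of_le (by norm_num)
  rw [iteratedDeriv_succ_flow hφ]
  interval_cases n
  · simp [rk4Slope_zero, hφ₀, smul_smul]
  · rw [iteratedDeriv_one, iteratedDeriv_one, deriv_comp_flow hV₁ hφ₀ hφ, deriv_rk4Slope hV₁]
    module
  · rw [iteratedDeriv_two_comp_flow hV₂ hφ₀ hφ (hφ_smooth.of_le (by norm_num)),
      iteratedDeriv_two_rk4Slope hV₂]
    module
  · rw [iteratedDeriv_three_comp_flow hV hφ₀ hφ hφ_smooth, iteratedDeriv_three_rk4Slope hV]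
    module

end OrderConditions

section LocalError

variable {φ : ℝ → E → E}

/-- The coefficient of `θ ^ 5` in the difference between the flow `φ` of `V` and the Runge–Kutta
map: the fifth Taylor coefficient of `φ` minus `1 / 6` of the fourth one of `rk4Slope V`. -/
def rk4ErrorCoeff (V : E → E) (φ : ℝ → E → E) (x : E) : E :=
  (1 / 120 : ℝ) • iteratedDeriv 5 (fun t ↦ φ t x) 0 -
    (1 / 144 : ℝ) • iteratedDeriv 4 (fun t ↦ rk4Slope V t x) 0

theorem continuous_rk4ErrorCoeff (hφ : IsTemperateFamily T 5 φ)
    (hK : IsTemperateFamily T 4 (rk4Slope V)) : Continuous (rk4ErrorCoeff V φ) :=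
  ((hφ.continuous_zero 5 le_rfl).const_smul _).sub ((hK.continuous_zero 4 le_rfl).const_smul _)

theorem hasPolyGrowth_rk4ErrorCoeff (hT : 0 ≤ T) (hφ : IsTemperateFamily T 5 φ)
    (hK : IsTemperateFamily T 4 (rk4Slope V)) : HasPolyGrowth (rk4ErrorCoeff V φ) := by
  have growth := ((hφ.growth 5 le_rfl).const_smul (1 / 120)).add
    ((hK.growth 4 le_rfl).const_smul (-(1 / 144)))
  simpa only [neg_smul, ← sub_eq_add_neg] using!
    growth.hasPolyGrowth (θ := 0) ⟨neg_nonpos.2 hT, hT⟩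

theorem isPolyBigO_rk4_local_error (hV : ContDiff ℝ 3 V) (hφ₀ : ∀ x, φ 0 x = x)
    (hφ : ∀ x t, HasDerivAt (fun s ↦ φ s x) (V (φ t x)) t) (hφ₆ : IsTemperateFamily T 6 φ)
    (hK : IsTemperateFamily T 5 (rk4Slope V)) :
    IsPolyBigO T 6 fun θ x ↦
      φ θ x - (x + (θ / 6) • rk4Slope V θ x) - θ ^ 5 • rk4ErrorCoeff V φ x := by
  have order_conditions (n : ℕ) (hn : n < 4) (x : E) := rk4_order_conditions hV hφ₀ hφ
    ((hφ₆.of_le (n := 3) (by norm_num)).contDiff x) hn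
  convert hφ₆.isPolyBigO_sub_taylor.add
    ((hK.isPolyBigO_sub_taylor.time_smul).const_smul (-(1 / 6))) using 3 with θ x
  simp only [Finset.sum_range_succ, Finset.sum_range_zero]
  rw [order_conditions 0 (by simp), order_conditions 1 (by simp), order_conditions 2 (by simp),
    order_conditions 3 (by simp)]
  simp only [rk4ErrorCoeff, iteratedDeriv_zero, iteratedDeriv_one, hφ₀, Nat.factorial]
  push_cast
  module

theorem rk4_local_error_expansion_general (T : ℝ) (hT : 0 ≤ T) (V : E → E)
    (hgrowth : ∃ A : ℝ, ∀ x, ‖V x‖ ≤ A * (1 + ‖x‖)) (hC5 : ContDiff ℝ 5 V)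
    (hD5 : HasPolyGrowth (iteratedFDeriv ℝ 5 V)) (φ : ℝ → E → E) (hφ₀ : ∀ x, φ 0 x = x)
    (hφ : ∀ x t, HasDerivAt (fun s ↦ φ s x) (V (φ t x)) t) :
    ∃ hV : E → E, Continuous hV ∧
      (∃ K : ℝ, 0 ≤ K ∧ ∃ r : ℕ, ∀ x, ‖hV x‖ ≤ K * (1 + ‖x‖ ^ r)) ∧
      ∃ C : ℝ, 0 < C ∧ ∃ q : ℕ, 1 ≤ q ∧ ∀ θ ∈ Icc (-T) T, ∀ x : E,
        ‖φ θ x - (x + (θ / 6) • rk4Slope V θ x) - θ ^ 5 • hV x‖ ≤ C * (1 + ‖x‖ ^ q) * θ ^ 6 := by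
  have hV₅ : HasTemperateGrowthUpTo 5 V := .of_iteratedFDeriv hC5 hD5
  have hφ₆ : IsTemperateFamily T 6 φ := .flow hV₅ hgrowth hφ₀ hφ
  have hK₅ : IsTemperateFamily T 5 (rk4Slope V) := .rk4Slope hT hV₅
  have hφ₅ : IsTemperateFamily T 5 φ := hφ₆.of_le (by norm_num)
  have hK₄ : IsTemperateFamily T 4 (rk4Slope V) := hK₅.of_le (by norm_num)
  have local_error := isPolyBigO_rk4_local_error (hC5.of_le (by norm_num)) hφ₀ hφ hφ₆ hK₅
  refine ⟨rk4ErrorCoeff V φ, continuous_rk4ErrorCoeff hφ₅ hK₄,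
    (hasPolyGrowth_rk4ErrorCoeff hT hφ₅ hK₄).exists_le_one_add_norm_pow, ?_⟩
  simpa only [Even.pow_abs (by decide : Even 6)] using local_error.exists_le_one_add_norm_pow

end LocalError

end RungeKutta

/-- pathwise fifth-order expansion of the local error of the
fourth-order Runge–Kutta scheme. -/
theorem rk4_local_error_expansion {n : ℕ} (T : ℝ) (hT : 0 < T) (V : Vec n → Vec n)
    (hLip : ∃ L : NNReal, LipschitzWith L V)
    (hC5 : ContDiff ℝ 5 V)
    (hD5 : PolyLocLip (iteratedFDeriv ℝ 5 V))
    (φ : ℝ → Vec n → Vec n) (hφ : IsFlow V φ) :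
    ∃ hV : Vec n → Vec n, Continuous hV ∧
      (∃ K : ℝ, 0 ≤ K ∧ ∃ r : ℕ, ∀ x, ‖hV x‖ ≤ K * (1 + ‖x‖ ^ r)) ∧
      ∃ C : ℝ, 0 < C ∧ ∃ q : ℕ, 1 ≤ q ∧
        ∀ θ ∈ Set.Icc (-T) T, ∀ x : Vec n,
          ‖φ θ x - rk4 V θ x - θ ^ 5 • hV x‖ ≤ C * (1 + ‖x‖ ^ q) * θ ^ 6 := by
  simpa only [rk4_eq_add_smul_rk4Slope] using rk4_local_error_expansion_general T hT.le V
    (exists_linear_growth_of_lipschitz hLip) hC5 hD5.hasPolyGrowth φ hφ.1 hφ.2
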